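/- Let G be a constructible graph containing an induced subgraph isomorphic to the graph K (identify its vertices with x, y, z, z', t, t', w accordingly), and suppose that every edge of G joining a vertex of this copy of K to a vertex outside it has its endpoint in K equal to x or to y. Then in every construction order of G, the vertex x occurs later than every other vertex of the copy of K, and every domination map for the order sends x to y. -/

import Mathlib

universe u

/-- `y` dominates `x` in `G`: `y ≠ x` and the closed neighbourhood of `x` is contained
in the closed neighbourhood of `y`. -/
def Dominates {V : Type u} (G : SimpleGraph V) (y x : V) : Prop :=
  y ≠ x ∧ ∀ z : V, (z = x ∨ G.Adj x z) → (z = y ∨ G.Adj y z)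

/-- `y` dominates `x` in the subgraph of `G` induced by `S`. -/
def DominatesOn {V : Type u} (G : SimpleGraph V) (S : Set V) (y x : V) : Prop :=
  y ≠ x ∧ ∀ z ∈ S, (z = x ∨ G.Adj x z) → (z = y ∨ G.Adj y z)

/-- `r` (a well-order on `V`) is a construction order for `G`: every non-root vertex `x`
(i.e. one with a strictly earlier vertex) is dominated, in the subgraph induced by the
vertices up to and including `x`, by some strictly earlier vertex. -/
def ConstructionOrderSpec {V : Type u} (G : SimpleGraph V) (r : V → V → Prop) : Prop :=
  ∀ x : V, (∃ y, r y x) → ∃ y, r y x ∧ DominatesOn G {z | r z x ∨ z = x} y x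

/-- A graph is constructible if it has a construction order. -/
def Constructible {V : Type u} (G : SimpleGraph V) : Prop :=
  ∃ r : V → V → Prop, IsWellOrder V r ∧ ConstructionOrderSpec G r

/-- `δ` is a domination map for the construction order `r` on `G`: it assigns to each non-root
vertex `x` a strictly earlier vertex dominating `x` in the subgraph induced by the vertices up
to and including `x`. -/
def IsDominationMap {V : Type u} (G : SimpleGraph V) (r : V → V → Prop) (δ : V → V) : Prop :=
  ∀ x : V, (∃ y, r y x) → r (δ x) x ∧ DominatesOn G {z | r z x ∨ z = x} (δ x) x

/-- The vertices of the graph `K`. -/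
inductive KVert : Type
  | x | y | z | z' | t | t' | w
deriving DecidableEq

open KVert in
/-- The edges of the graph `K`: xy, xt, xt', yz, yz', yt, yt', zz', zt, zw, z't', z'w, tw, t'w. -/
def KRel : KVert → KVert → Prop := fun a b =>
  (a, b) ∈ ([(x, y), (x, t), (x, t'), (y, z), (y, z'), (y, t), (y, t'), (z, z'), (z, t),
      (z, w), (z', t'), (z', w), (t, w), (t', w)] : List (KVert × KVert))

/-- The graph `K`. -/
def KGraph : SimpleGraph KVert := SimpleGraph.fromRel KRel

/-!
Consider the vertex `l` of the copy of `K` that comes last in the order. All of the copy is present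
when `l` is added, so a vertex dominating `l` at that moment is adjacent or equal to every neighbour
of `l` in `K`. One of these neighbours is neither `x` nor `y`, hence has no neighbours outside the
copy; so the dominating vertex belongs to the copy and dominates `l` in `K`. But the only domination
in `K` is that of `x` by `y`.
-/

section Embedding

variable {V W : Type*} {G : SimpleGraph V} {H : SimpleGraph W} {S : Set V} {A : Set W}

/-- The copy of a graph given by `f : W → V` is attached to the rest of `G` only within `A`: every
edge of `G` between a vertex `f a` of the copy and a vertex outside the copy has `a ∈ A`. -/
def AttachedWithin (G : SimpleGraph V) (f : W → V) (A : Set W) : Prop :=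
  ∀ (a : W) (v : V), v ∉ Set.range f → G.Adj (f a) v → a ∈ A

theorem DominatesOn.dominates_of_embedding {f : H ↪g G} (hS : Set.range f ⊆ S) {a b : W}
    (hdom : DominatesOn G S (f b) (f a)) : Dominates H b a := by
  refine ⟨ne_of_apply_ne f hdom.1, fun c hc => ?_⟩
  have hfc := hdom.2 (f c) (hS ⟨c, rfl⟩)
  simp only [f.map_adj_iff, f.injective.eq_iff] at hfc
  exact hfc hc

theorem DominatesOn.mem_range {f : H ↪g G} (hA : AttachedWithin G f A) (hS : Set.range f ⊆ S)
    {a : W} (ha : ∃ c ∉ A, H.Adj a c) {p : V} (hdom : DominatesOn G S p (f a)) :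
    p ∈ Set.range f := by
  obtain ⟨c, hcA, hac⟩ := ha
  by_contra hp
  rcases hdom.2 (f c) (hS ⟨c, rfl⟩) (.inr (f.map_adj_iff.2 hac)) with hcp | hpc
  · exact hp ⟨c, hcp⟩
  · exact hcA (hA c p hp hpc.symm)

end Embedding

section LastVertex

variable {V W : Type*} {G : SimpleGraph V} {H : SimpleGraph W} {A : Set W}
  (r : V → V → Prop) [IsStrictTotalOrder V r]

theorem exists_forall_rel_or_eq [Finite W] [Nonempty W] (f : W → V) :
    ∃ l, ∀ a, r (f a) (f l) ∨ f a = f l := by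
  classical
  let := linearOrderOfSTO r
  obtain ⟨l, hl⟩ := Finite.exists_max f
  exact ⟨l, fun a => (hl a).lt_or_eq⟩

theorem exists_last_dominates_of_dominatesOn [Finite W] [Nonempty W] {f : H ↪g G}
    (hA : AttachedWithin G f A) (hH : ∀ a, ∃ c ∉ A, H.Adj a c) :
    ∃ l, (∀ a, a ≠ l → r (f a) (f l)) ∧
      ∀ p, DominatesOn G {z | r z (f l) ∨ z = f l} p (f l) → ∃ b, f b = p ∧ Dominates H b l := by
  obtain ⟨l, hl⟩ := exists_forall_rel_or_eq r f
  have hS : Set.range f ⊆ {z | r z (f l) ∨ z = f l} := Set.range_subset_iff.2 hl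
  refine ⟨l, fun a hal => (hl a).resolve_right (f.injective.ne hal), fun p hdom => ?_⟩
  obtain ⟨b, rfl⟩ := hdom.mem_range hA hS (hH l)
  exact ⟨b, rfl, hdom.dominates_of_embedding hS⟩

end LastVertex

section KGraph

instance : Fintype KVert :=
  ⟨{.x, .y, .z, .z', .t, .t', .w}, fun a => by cases a <;> decide⟩

instance : DecidableRel KRel := fun _ _ => inferInstanceAs (Decidable (_ ∈ _))

instance : DecidableRel KGraph.Adj :=
  inferInstanceAs (DecidableRel (SimpleGraph.fromRel KRel).Adj)

theorem dominates_KGraph_iff : ∀ {b a : KVert}, Dominates KGraph b a ↔ a = .x ∧ b = .y := by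
  unfold Dominates
  decide

theorem exists_notMem_x_y_KGraph_adj :
    ∀ a : KVert, ∃ c ∉ ({.x, .y} : Set KVert), KGraph.Adj a c := by
  simp only [Set.mem_insert_iff, Set.mem_singleton_iff]
  decide

end KGraph

theorem last_K_vertex_is_x_with_parent_y_general {V : Type*} {G : SimpleGraph V} (f : KGraph ↪g G)
    (hbd : AttachedWithin G f {.x, .y}) (r : V → V → Prop) [IsStrictTotalOrder V r]
    (hspec : ConstructionOrderSpec G r) :
    (∀ a, a ≠ .x → r (f a) (f .x)) ∧ ∀ δ, IsDominationMap G r δ → δ (f .x) = f .y := by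
  have : Nonempty KVert := ⟨.x⟩
  obtain ⟨l, hlast, hparent⟩ :=
    exists_last_dominates_of_dominatesOn r hbd exists_notMem_x_y_KGraph_adj
  have hnonroot : ∃ v, r v (f l) := by
    obtain ⟨c, -, hlc⟩ := exists_notMem_x_y_KGraph_adj l
    exact ⟨f c, hlast c hlc.ne'⟩
  obtain rfl : l = .x := by
    obtain ⟨p, -, hp⟩ := hspec (f l) hnonroot
    obtain ⟨b, -, hbl⟩ := hparent p hp
    exact (dominates_KGraph_iff.1 hbl).1
  refine ⟨hlast, fun δ hδ => ?_⟩
  obtain ⟨b, hb, hbx⟩ := hparent _ (hδ (f .x) hnonroot).2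
  rw [← hb, (dominates_KGraph_iff.1 hbx).2]

theorem last_K_vertex_is_x_with_parent_y {V : Type u} (G : SimpleGraph V)
    (f : KVert → V) (hinj : Function.Injective f)
    (hind : ∀ a b : KVert, G.Adj (f a) (f b) ↔ KGraph.Adj a b)
    (hbd : ∀ (a : KVert) (v : V), v ∉ Set.range f → G.Adj (f a) v →
      a = KVert.x ∨ a = KVert.y)
    (hG : Constructible G) :
    ∀ r : V → V → Prop, IsWellOrder V r → ConstructionOrderSpec G r →
      (∀ a : KVert, a ≠ KVert.x → r (f a) (f KVert.x)) ∧
      (∀ δ : V → V, IsDominationMap G r δ → δ (f KVert.x) = f KVert.y) :=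
  fun r _ hspec =>
    last_K_vertex_is_x_with_parent_y_general ⟨⟨f, hinj⟩, hind _ _⟩ hbd r hspec
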